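/- Let n, m ≥ 1, let c ∈ ℝ and c < b ≤ +∞, and let B, B₁ : [c,b) → ℂ^{2n×2n} be continuous with B(x) and B₁(x) Hermitian for every x. Suppose X, Y : [c,b) → ℂ^{2n×m} are continuously differentiable and satisfy J X'(x) = B(x) X(x) and J Y'(x) = B₁(x) X(x) + B(x) Y(x) on [c,b), that lim_{x→b⁻} X(x)* J Y(x) = 0, and that the improper integral ∫_c^b X(ξ)* B₁(ξ) X(ξ) dξ converges. Then X(c)* J Y(c) = − ∫_c^b X(ξ)* B₁(ξ) X(ξ) dξ. If in addition B₁(ξ) is positive semidefinite for every ξ and for every nonzero v ∈ ℂ^m one has ∫_c^b (X(ξ)v)* B₁(ξ) (X(ξ)v) dξ > 0, then the Hermitian matrix X(c)* J Y(c) is negative definite. -/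

import Mathlib

open Matrix MeasureTheory
open scoped ComplexOrder

/-- The standard `2n × 2n` complex symplectic matrix `J = [[0, -Iₙ],[Iₙ, 0]]`,
with `ℂ^{2n}` realized as functions on `Fin n ⊕ Fin n`. -/
noncomputable def symJ (n : ℕ) : Matrix (Fin n ⊕ Fin n) (Fin n ⊕ Fin n) ℂ :=
  Matrix.fromBlocks 0 (-1) 1 0

/-!
The bracket `W = X* K Y`, with `K` skew-Hermitian, satisfies the Lagrange identity
`W' = X* B₁ X`: the two terms containing the Hermitian matrix `B` cancel. Since `W` vanishes at
the singular endpoint, integrating from `c` gives `W(c) = -∫ X* B₁ X`. As `W'` is Hermitian,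
`W - W*` is constant, hence zero, so `W(c)` is Hermitian; and integrating `v* W' v` identifies
`-v* W(c) v` with the integral assumed positive.
-/

open Filter Set Topology

lemma conjTranspose_symJ (n : ℕ) : (symJ n)ᴴ = -symJ n := by
  simp [symJ, fromBlocks_conjTranspose, fromBlocks_neg]

lemma ordConnected_setOf_le_and_coe_lt (a : ℝ) (b : EReal) :
    {x : ℝ | a ≤ x ∧ (x : EReal) < b}.OrdConnected :=
  ordConnected_Ici.inter (ordConnected_Iio.preimage_mono EReal.coe_strictMono.monotone)

lemma comap_coe_nhdsLT_neBot {b : EReal} (hb : ⊥ < b) :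
    (comap (fun x : ℝ => (x : EReal)) (𝓝[<] b)).NeBot := by
  refine comap_neBot fun t ht => ?_
  obtain ⟨l, hl, hlt⟩ := (mem_nhdsLT_iff_exists_Ioo_subset' hb).1 ht
  obtain ⟨x, hlx, hxb⟩ := EReal.lt_iff_exists_real_btwn.1 hl
  exact ⟨x, hlt ⟨hlx, hxb⟩⟩

lemma comap_coe_nhdsLT_le_principal {a : ℝ} {b : EReal} (hab : a < b) :
    comap (fun x : ℝ => (x : EReal)) (𝓝[<] b) ≤ 𝓟 {x : ℝ | a ≤ x ∧ (x : EReal) < b} :=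
  le_principal_iff.2 <| mem_of_superset (preimage_mem_comap (Ico_mem_nhdsLT hab))
    fun _ hx => ⟨EReal.coe_le_coe_iff.1 hx.1, hx.2⟩

lemma tendsto_integral_of_hasDerivWithinAt {E : Type*} [NormedAddCommGroup E] [NormedSpace ℝ E]
    [CompleteSpace E] {D : Set ℝ} {c : ℝ} {l : Filter ℝ} {F f : ℝ → E} {F₀ : E}
    (hD : D.OrdConnected) (hc : c ∈ D) (hl : l ≤ 𝓟 D)
    (hF : ∀ x ∈ D, HasDerivWithinAt F (f x) D x) (hf : ContinuousOn f D)
    (hlim : Tendsto F l (𝓝 F₀)) :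
    Tendsto (fun t => ∫ ξ in c..t, f ξ) l (𝓝 (F₀ - F c)) := by
  refine (hlim.sub_const (F c)).congr' ?_
  filter_upwards [le_principal_iff.1 hl] with t ht
  have hsub : uIcc c t ⊆ D := hD.uIcc_subset hc ht
  have hderiv : ∀ x ∈ Ioo (min c t) (max c t), HasDerivAt F (f x) x := fun x hx =>
    (hF x (hsub (Ioo_subset_Icc_self hx))).hasDerivAt
      (mem_of_superset (Icc_mem_nhds hx.1 hx.2) hsub)
  exact (intervalIntegral.integral_eq_sub_of_hasDeriv_right
    (fun x hx => ((hF x (hsub hx)).mono hsub).continuousWithinAt)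
    (fun x hx => (hderiv x hx).hasDerivWithinAt)
    (hf.mono hsub).intervalIntegrable).symm

lemma continuousOn_conjTranspose_mul_mul {α R p q r s : Type*} [TopologicalSpace α]
    [TopologicalSpace R] [NonUnitalSemiring R] [StarRing R] [IsTopologicalSemiring R]
    [ContinuousStar R] [Fintype q] [Fintype r] {S : Set α} {Z : α → Matrix q p R}
    {A : α → Matrix q r R} {Y : α → Matrix r s R} (hZ : ContinuousOn Z S)
    (hA : ContinuousOn A S) (hY : ContinuousOn Y S) :
    ContinuousOn (fun x => (Z x)ᴴ * A x * Y x) S := by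
  rw [continuousOn_iff_continuous_domRestrict] at *
  exact (hZ.matrix_conjTranspose.matrix_mul hA).matrix_mul hY

section MatrixDeriv

variable {𝕜 R p q r : Type*} [NontriviallyNormedField 𝕜] [NormedRing R] [NormedAlgebra 𝕜 R]
  {D : Set 𝕜} {x : 𝕜}

lemma hasDerivWithinAt_matrix_iff [Finite q] {E : Type*} [NormedAddCommGroup E] [NormedSpace 𝕜 E]
    {A : 𝕜 → Matrix p q E} {A' : Matrix p q E} :
    HasDerivWithinAt A A' D x ↔ ∀ i j, HasDerivWithinAt (fun t => A t i j) (A' i j) D x := by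
  have := Fintype.ofFinite q
  exact hasDerivWithinAt_pi.trans (forall_congr' fun _ => hasDerivWithinAt_pi)

lemma continuousWithinAt_of_hasDerivWithinAt_matrix [Finite q] {E : Type*} [NormedAddCommGroup E]
    [NormedSpace 𝕜 E] {A : 𝕜 → Matrix p q E} {A' : Matrix p q E}
    (hA : HasDerivWithinAt A A' D x) : ContinuousWithinAt A D x :=
  continuousWithinAt_pi.2 fun i => continuousWithinAt_pi.2 fun j =>
    (hasDerivWithinAt_matrix_iff.1 hA i j).continuousWithinAt

lemma hasDerivWithinAt_matrix_mul [Fintype q] [Finite r] {A : 𝕜 → Matrix p q R}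
    {C : 𝕜 → Matrix q r R} {A' : Matrix p q R} {C' : Matrix q r R}
    (hA : HasDerivWithinAt A A' D x) (hC : HasDerivWithinAt C C' D x) :
    HasDerivWithinAt (fun t => A t * C t) (A' * C x + A x * C') D x := by
  rw [hasDerivWithinAt_matrix_iff] at *
  intro i j
  simp only [Matrix.mul_apply, Matrix.add_apply, ← Finset.sum_add_distrib]
  exact HasDerivWithinAt.fun_sum fun k _ => (hA i k).fun_mul (hC k j)

lemma hasDerivWithinAt_dotProduct_mulVec [Fintype p] [Fintype q] {A : 𝕜 → Matrix p q R}
    {A' : Matrix p q R} (hA : HasDerivWithinAt A A' D x) (u : p → R) (v : q → R) :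
    HasDerivWithinAt (fun t => u ⬝ᵥ (A t *ᵥ v)) (u ⬝ᵥ (A' *ᵥ v)) D x := by
  rw [hasDerivWithinAt_matrix_iff] at hA
  exact HasDerivWithinAt.fun_sum fun i _ =>
    (HasDerivWithinAt.fun_sum fun j _ => (hA i j).mul_const (v j)).const_mul (u i)

variable [StarRing 𝕜] [TrivialStar 𝕜]

lemma hasDerivWithinAt_conjTranspose [Finite p] [Finite q] {E : Type*} [NormedAddCommGroup E]
    [NormedSpace 𝕜 E] [StarAddMonoid E] [StarModule 𝕜 E] [ContinuousStar E]
    {A : 𝕜 → Matrix p q E} {A' : Matrix p q E} (hA : HasDerivWithinAt A A' D x) :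
    HasDerivWithinAt (fun t => (A t)ᴴ) A'ᴴ D x :=
  hasDerivWithinAt_matrix_iff.2 fun i j => (hasDerivWithinAt_matrix_iff.1 hA j i).star

lemma hasDerivWithinAt_conjTranspose_mul_mul_of_hamiltonian [Finite p] [Fintype q]
    [Finite r] [StarRing R] [StarModule 𝕜 R] [ContinuousStar R] {K B : Matrix q q R}
    (hK : Kᴴ = -K) (hB : B.IsHermitian)
    {Z : 𝕜 → Matrix q p R} {Y : 𝕜 → Matrix q r R} {Z' : Matrix q p R} {Y' G : Matrix q r R}
    (hZ : HasDerivWithinAt Z Z' D x) (hY : HasDerivWithinAt Y Y' D x)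
    (hodeZ : K * Z' = B * Z x) (hodeY : K * Y' = G + B * Y x) :
    HasDerivWithinAt (fun t => (Z t)ᴴ * K * Y t) ((Z x)ᴴ * G) D x := by
  have hadjoint : Z'ᴴ * K = -((Z x)ᴴ * B) := by
    simpa [hK, hB.eq, neg_eq_iff_eq_neg] using congrArg conjTranspose hodeZ
  have hK_const : HasDerivWithinAt (fun _ => K) 0 D x :=
    hasDerivWithinAt_matrix_iff.2 fun i j => hasDerivWithinAt_const x D (K i j)
  have hZ_star := hasDerivWithinAt_conjTranspose hZ
  have hZK : HasDerivWithinAt (fun t => (Z t)ᴴ * K) (Z'ᴴ * K) D x := by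
    simpa using hasDerivWithinAt_matrix_mul hZ_star hK_const
  have hderiv : Z'ᴴ * K * Y x + (Z x)ᴴ * K * Y' = (Z x)ᴴ * G := by
    rw [hadjoint, Matrix.mul_assoc _ K, hodeY, Matrix.mul_add, Matrix.neg_mul,
      Matrix.mul_assoc _ B, add_comm, add_neg_cancel_right]
  exact hderiv ▸ hasDerivWithinAt_matrix_mul hZK hY

end MatrixDeriv

section LimitAtEndpoint

variable {D : Set ℝ} {c : ℝ} {l : Filter ℝ} [l.NeBot]

lemma eq_sub_of_tendsto_integral {E p q : Type*} [NormedAddCommGroup E] [NormedSpace ℝ E]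
    [CompleteSpace E] [Finite q] {W M : ℝ → Matrix p q E} {W₀ T : Matrix p q E}
    (hD : D.OrdConnected) (hc : c ∈ D) (hl : l ≤ 𝓟 D)
    (hW : ∀ x ∈ D, HasDerivWithinAt W (M x) D x) (hMcont : ContinuousOn M D)
    (hlim : Tendsto W l (𝓝 W₀))
    (hT : ∀ i j, Tendsto (fun t => ∫ ξ in c..t, M ξ i j) l (𝓝 (T i j))) :
    W c = W₀ - T := by
  ext i j
  have hint := tendsto_integral_of_hasDerivWithinAt hD hc hl
    (fun x hx => hasDerivWithinAt_matrix_iff.1 (hW x hx) i j)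
    ((continuous_id.matrix_elem i j).comp_continuousOn hMcont)
    (((continuous_id.matrix_elem i j).tendsto W₀).comp hlim)
  have hT_eq : T i j = W₀ i j - W c i j := tendsto_nhds_unique (hT i j) hint
  rw [Matrix.sub_apply, hT_eq, sub_sub_cancel]

variable {𝕜 p : Type*} [RCLike 𝕜] {W M : ℝ → Matrix p p 𝕜}

lemma isHermitian_of_hasDerivWithinAt_of_tendsto [Finite p] {W₀ : Matrix p p 𝕜}
    (hD : D.OrdConnected) (hc : c ∈ D) (hl : l ≤ 𝓟 D) (hW : ∀ x ∈ D, HasDerivWithinAt W (M x) D x)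
    (hM : ∀ x ∈ D, (M x).IsHermitian) (hlim : Tendsto W l (𝓝 W₀)) (hW₀ : W₀.IsHermitian) :
    (W c).IsHermitian := by
  ext i j
  have hderiv : ∀ x ∈ D, HasDerivWithinAt (fun t => star (W t j i) - W t i j) 0 D x :=
    fun x hx => by
      have hentry := hasDerivWithinAt_matrix_iff.1 (hW x hx)
      simpa only [(hM x hx).apply i j, sub_self] using (hentry j i).star.fun_sub (hentry i j)
  have hskewlim : Tendsto (fun t => star (W t j i) - W t i j) l (𝓝 0) := by
    have hentry (a b : p) : Tendsto (fun t => W t a b) l (𝓝 (W₀ a b)) :=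
      ((continuous_id.matrix_elem a b).tendsto W₀).comp hlim
    simpa only [hW₀.apply i j, sub_self] using (hentry j i).star.sub (hentry i j)
  have hconst := tendsto_integral_of_hasDerivWithinAt hD hc hl hderiv continuousOn_const hskewlim
  simp only [intervalIntegral.integral_zero, zero_sub, neg_sub, tendsto_const_nhds_iff] at hconst
  exact (sub_eq_zero.1 hconst.symm).symm

lemma neg_posDef_of_tendsto_integral_pos [Fintype p] (hD : D.OrdConnected) (hc : c ∈ D)
    (hl : l ≤ 𝓟 D) (hW : ∀ x ∈ D, HasDerivWithinAt W (M x) D x) (hMcont : ContinuousOn M D)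
    (hM : ∀ x ∈ D, (M x).IsHermitian) (hlim : Tendsto W l (𝓝 0))
    (hpos : ∀ v : p → 𝕜, v ≠ 0 → ∃ L : ℝ, 0 < L ∧
      Tendsto (fun t => ∫ ξ in c..t, RCLike.re (star v ⬝ᵥ (M ξ *ᵥ v))) l (𝓝 L)) :
    (-W c).PosDef := by
  have hherm : (-W c).IsHermitian :=
    (isHermitian_of_hasDerivWithinAt_of_tendsto hD hc hl hW hM hlim isHermitian_zero).neg
  refine .of_dotProduct_mulVec_pos hherm fun v hv => ?_
  obtain ⟨L, hL, hLlim⟩ := hpos v hv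
  have hderiv (x : ℝ) (hx : x ∈ D) : HasDerivWithinAt
      (fun t => RCLike.re (star v ⬝ᵥ (W t *ᵥ v))) (RCLike.re (star v ⬝ᵥ (M x *ᵥ v))) D x :=
    (RCLike.reCLM (K := 𝕜)).hasFDerivAt.comp_hasDerivWithinAt x
      (hasDerivWithinAt_dotProduct_mulVec (hW x hx) (star v) v)
  have hformcont : Continuous fun A : Matrix p p 𝕜 => RCLike.re (star v ⬝ᵥ (A *ᵥ v)) := by
    fun_prop
  have hint := tendsto_integral_of_hasDerivWithinAt hD hc hl hderiv
    (hformcont.comp_continuousOn hMcont) ((hformcont.tendsto 0).comp hlim)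
  have hre : RCLike.re (star v ⬝ᵥ (-W c *ᵥ v)) = L := by
    simpa [neg_mulVec] using tendsto_nhds_unique hint hLlim
  exact RCLike.pos_iff.2 ⟨hre ▸ hL, hherm.im_star_dotProduct_mulVec_self v⟩

end LimitAtEndpoint

theorem singular_endpoint_monotonicity_general {𝕜 q m : Type*} [RCLike 𝕜] [Fintype q]
    [Fintype m] {K : Matrix q q 𝕜} (hK : Kᴴ = -K) {D : Set ℝ} (hD : D.OrdConnected) {c : ℝ}
    (hc : c ∈ D) {l : Filter ℝ} [l.NeBot] (hl : l ≤ 𝓟 D)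
    {B B₁ : ℝ → Matrix q q 𝕜} {X Y X' Y' : ℝ → Matrix q m 𝕜} {T : Matrix m m 𝕜}
    (hB₁cont : ContinuousOn B₁ D) (hB : ∀ x ∈ D, (B x).IsHermitian)
    (hB₁ : ∀ x ∈ D, (B₁ x).IsHermitian)
    (hX : ∀ x ∈ D, HasDerivWithinAt X (X' x) D x) (hY : ∀ x ∈ D, HasDerivWithinAt Y (Y' x) D x)
    (hodeX : ∀ x ∈ D, K * X' x = B x * X x)
    (hodeY : ∀ x ∈ D, K * Y' x = B₁ x * X x + B x * Y x)
    (hlim : Tendsto (fun x => (X x)ᴴ * K * Y x) l (𝓝 0))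
    (hT : ∀ i j, Tendsto (fun t => ∫ ξ in c..t, ((X ξ)ᴴ * B₁ ξ * X ξ) i j) l (𝓝 (T i j))) :
    (X c)ᴴ * K * Y c = -T ∧
      ((∀ v : m → 𝕜, v ≠ 0 → ∃ L : ℝ, 0 < L ∧
          Tendsto (fun t => ∫ ξ in c..t, RCLike.re (star (X ξ *ᵥ v) ⬝ᵥ (B₁ ξ *ᵥ (X ξ *ᵥ v))))
            l (𝓝 L)) →
        (-((X c)ᴴ * K * Y c)).PosDef) := by
  have hW : ∀ x ∈ D, HasDerivWithinAt (fun t => (X t)ᴴ * K * Y t) ((X x)ᴴ * B₁ x * X x) D x :=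
    fun x hx => by
      simpa only [Matrix.mul_assoc] using hasDerivWithinAt_conjTranspose_mul_mul_of_hamiltonian hK
        (hB x hx) (hX x hx) (hY x hx) (hodeX x hx) (hodeY x hx)
  have hXcont : ContinuousOn X D := fun x hx =>
    continuousWithinAt_of_hasDerivWithinAt_matrix (hX x hx)
  have hMcont := continuousOn_conjTranspose_mul_mul hXcont hB₁cont hXcont
  have hT_eq := eq_sub_of_tendsto_integral hD hc hl hW hMcont hlim hT
  refine ⟨hT_eq.trans (zero_sub T), fun hpos => ?_⟩
  refine neg_posDef_of_tendsto_integral_pos hD hc hl hW hMcont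
    (fun x hx => isHermitian_conjTranspose_mul_mul _ (hB₁ x hx)) hlim fun v hv => ?_
  simpa only [star_mulVec, ← dotProduct_mulVec, mulVec_mulVec, Matrix.mul_assoc] using hpos v hv

/-- If `J X' = B X` and `J Y' = B₁ X + B Y` on `[c, b)` (with `b ≤ +∞` encoded as
`b : EReal`), `X* J Y → 0` at `b⁻`, and the improper integral `∫_c^b X* B₁ X` converges
(entrywise, to `T`), then `X(c)* J Y(c) = −T`; if moreover `B₁` is positive semidefinite
and all the quadratic integrals `∫_c^b (Xv)* B₁ (Xv)` converge to positive limits, the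
Hermitian matrix `X(c)* J Y(c)` is negative definite. -/
theorem singular_endpoint_monotonicity
    (n m : ℕ) (hn : 1 ≤ n) (hm : 1 ≤ m) (c : ℝ) (b : EReal) (hcb : (c : EReal) < b)
    (D : Set ℝ) (hD : D = {x : ℝ | c ≤ x ∧ (x : EReal) < b})
    (lb : Filter ℝ)
    (hlb : lb = Filter.comap (fun x : ℝ => (x : EReal)) (nhdsWithin b (Set.Iio b)))
    (B B₁ : ℝ → Matrix (Fin n ⊕ Fin n) (Fin n ⊕ Fin n) ℂ)
    (X Y X' Y' : ℝ → Matrix (Fin n ⊕ Fin n) (Fin m) ℂ)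
    (T : Matrix (Fin m) (Fin m) ℂ)
    (hBcont : ∀ i j, ContinuousOn (fun x => B x i j) D)
    (hB₁cont : ∀ i j, ContinuousOn (fun x => B₁ x i j) D)
    (hBherm : ∀ x ∈ D, (B x).IsHermitian)
    (hB₁herm : ∀ x ∈ D, (B₁ x).IsHermitian)
    (hX : ∀ x ∈ D, ∀ i j, HasDerivWithinAt (fun t => X t i j) (X' x i j) D x)
    (hX'cont : ∀ i j, ContinuousOn (fun x => X' x i j) D)
    (hY : ∀ x ∈ D, ∀ i j, HasDerivWithinAt (fun t => Y t i j) (Y' x i j) D x)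
    (hY'cont : ∀ i j, ContinuousOn (fun x => Y' x i j) D)
    (hodeX : ∀ x ∈ D, symJ n * X' x = B x * X x)
    (hodeY : ∀ x ∈ D, symJ n * Y' x = B₁ x * X x + B x * Y x)
    (hlim : ∀ i j, Filter.Tendsto (fun x => ((X x)ᴴ * symJ n * Y x) i j) lb (nhds 0))
    (hT : ∀ i j, Filter.Tendsto
        (fun t => ∫ ξ in c..t, ((X ξ)ᴴ * B₁ ξ * X ξ) i j) lb (nhds (T i j))) :
    (X c)ᴴ * symJ n * Y c = -T
    ∧ ((∀ x ∈ D, (B₁ x).PosSemidef) →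
        (∀ v : Fin m → ℂ, v ≠ 0 →
          ∃ L : ℝ, 0 < L ∧
            Filter.Tendsto
              (fun t => ∫ ξ in c..t, (star (X ξ *ᵥ v) ⬝ᵥ (B₁ ξ *ᵥ (X ξ *ᵥ v))).re)
              lb (nhds L)) →
        (-((X c)ᴴ * symJ n * Y c)).PosDef) := by
  subst hD hlb
  have hne := comap_coe_nhdsLT_neBot (bot_le.trans_lt hcb)
  exact (singular_endpoint_monotonicity_general (conjTranspose_symJ n)
    (ordConnected_setOf_le_and_coe_lt c b) ⟨le_rfl, hcb⟩ (comap_coe_nhdsLT_le_principal hcb)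
    (continuousOn_pi.2 fun i => continuousOn_pi.2 (hB₁cont i)) hBherm hB₁herm
    (fun x hx => hasDerivWithinAt_matrix_iff.2 (hX x hx))
    (fun x hx => hasDerivWithinAt_matrix_iff.2 (hY x hx)) hodeX hodeY
    (tendsto_pi_nhds.2 fun i => tendsto_pi_nhds.2 (hlim i)) hT).imp_right fun h _ => h
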